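/- arXiv:2105.07247 — 2 statements merged into one kernel-verified Lean document; each statement's English description precedes it below -/
import Mathlib

section
/- Let G be a finite group, N a normal subgroup with Q = G/N abelian, and ρ an irreducible complex character of G. Then the order of the stabilizer of ρ in Q̂ under the tensoring action equals the inner product ⟨Res_N ρ, Res_N ρ⟩ of the restriction of ρ to N with itself, i.e. #Stab_{Q̂}(ρ) = (1/#N) Σ_{n∈N} ρ(n) conj(ρ(n)). -/
open scoped BigOperators

/-- `ρ : G → ℂ` is the character of an irreducible (simple) finite-dimensional
complex representation of `G`. -/
def IsIrrChar (G : Type) [Group G] (ρ : G → ℂ) : Prop :=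
  ∃ V : FDRep ℂ G, CategoryTheory.Simple V ∧ ρ = V.character

/-- `Θ : G → ℂ` is the character of some finite-dimensional complex representation of `G`. -/
def IsChar (G : Type) [Group G] (Θ : G → ℂ) : Prop :=
  ∃ V : FDRep ℂ G, Θ = V.character

variable {G : Type} [Group G]

/-- The action of a character `χ ∈ Q̂` (where `Q = G ⧸ N`) on a function `ρ : G → ℂ`:
`(χ · ρ)(g) = χ(gN) · ρ(g)`. -/
def charMul (N : Subgroup G) [N.Normal] (χ : (G ⧸ N) →* ℂˣ) (ρ : G → ℂ) : G → ℂ :=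
  fun g => (χ (g : G ⧸ N) : ℂ) * ρ g

/-- The orbit of `ρ` under the tensoring action of `Q̂ = Hom(G ⧸ N, ℂˣ)`. -/
def qhatOrbit (N : Subgroup G) [N.Normal] (ρ : G → ℂ) : Set (G → ℂ) :=
  {ρ' | ∃ χ : (G ⧸ N) →* ℂˣ, ρ' = charMul N χ ρ}

/-- The coset `qN`, as a subset of `G`. -/
def coset (N : Subgroup G) [N.Normal] (q : G) : Set G :=
  {g | (g : G ⧸ N) = (q : G ⧸ N)}

/-- `C_q`: the set of conjugacy classes of `G` contained in the coset `qN`. -/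
def Cset (N : Subgroup G) [N.Normal] (q : G) : Set (ConjClasses G) :=
  {c | c.carrier ⊆ coset N q}

/-- `R_q`: the set of `Q̂`-orbits on the irreducible characters of `G`
containing a character not identically zero on `qN`. -/
def Rset (N : Subgroup G) [N.Normal] (q : G) : Set (Set (G → ℂ)) :=
  {S | (∃ ρ, IsIrrChar G ρ ∧ S = qhatOrbit N ρ) ∧ ∃ ρ' ∈ S, ∃ g ∈ coset N q, ρ' g ≠ 0}

/-- The class function `π_x` for `x ∈ Q = G ⧸ N`:
`π_x(g) = (1/#Q̂) ∑_{χ ∈ Q̂} conj(χ(x)) χ(gN)`. -/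
noncomputable def piQ (N : Subgroup G) [N.Normal] (x : G ⧸ N) : G → ℂ :=
  fun g => (Nat.card ((G ⧸ N) →* ℂˣ) : ℂ)⁻¹ *
    ∑ᶠ χ : (G ⧸ N) →* ℂˣ, (starRingEnd ℂ) (χ x : ℂ) * (χ (g : G ⧸ N) : ℂ)

/-- The space of class functions on `G`, as a submodule of `G → ℂ`. -/
noncomputable def classFunSubmodule (G : Type) [Group G] : Submodule ℂ (G → ℂ) where
  carrier := {f | ∀ g h : G, f (h * g * h⁻¹) = f g}
  add_mem' := by intro a b ha hb g h; simp only [Pi.add_apply, ha g h, hb g h]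
  zero_mem' := by intro g h; rfl
  smul_mem' := by intro c f hf g h; simp only [Pi.smul_apply, hf g h]

/-- The space of class functions on `G` vanishing outside the coset `qN`. -/
noncomputable def cosetClassFun (N : Subgroup G) [N.Normal] (q : G) : Submodule ℂ (G → ℂ) where
  carrier := {f | (∀ g h : G, f (h * g * h⁻¹) = f g) ∧ ∀ g, g ∉ coset N q → f g = 0}
  add_mem' := by
    intro a b ha hb
    exact ⟨fun g h => by simp only [Pi.add_apply, ha.1 g h, hb.1 g h],
      fun g hg => by simp only [Pi.add_apply, ha.2 g hg, hb.2 g hg, add_zero]⟩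
  zero_mem' := ⟨fun g h => rfl, fun g hg => rfl⟩
  smul_mem' := by
    intro c f hf
    exact ⟨fun g h => by simp only [Pi.smul_apply, hf.1 g h],
      fun g hg => by simp only [Pi.smul_apply, hf.2 g hg, smul_zero]⟩

lemma aux_trace_inv {G : Type} [Group G] [Fintype G] {n : Type} [Fintype n] [DecidableEq n]
    (M : G →* Matrix n n ℂ) (g : G) : (M g⁻¹).trace = (starRingEnd ℂ) (M g).trace := by
  classical
  open scoped ComplexOrder in
  have hP : (∑ h : G, (M h).conjTranspose * M h).PosDef := by
    refine Matrix.posDef_sum ⟨1, Finset.mem_univ _⟩ ?_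
    intro h _
    refine Matrix.PosDef.conjTranspose_mul_self _ ?_
    apply Matrix.mulVec_injective_of_isUnit
    exact (Group.isUnit h).map M
  have hu := hP.isUnit
  set P := ∑ h : G, (M h).conjTranspose * M h with hPdef
  have hinv : (M g).conjTranspose * P * M g = P := by
    rw [hPdef, Finset.mul_sum, Finset.sum_mul]
    refine Fintype.sum_equiv (Equiv.mulRight g) _ _ ?_
    intro h
    simp [Matrix.conjTranspose_mul, Matrix.mul_assoc]
  have h1 : (M g).conjTranspose * P = P * M g⁻¹ := by
    conv_rhs => rw [← hinv]
    rw [Matrix.mul_assoc _ (M g), ← map_mul]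
    simp
  have hd : IsUnit P.det := (Matrix.isUnit_iff_isUnit_det _).1 hu
  have h2 : M g⁻¹ = P⁻¹ * ((M g).conjTranspose * P) := by
    rw [h1, ← Matrix.mul_assoc, Matrix.nonsing_inv_mul _ hd, Matrix.one_mul]
  rw [h2, Matrix.trace_mul_comm, Matrix.mul_assoc, Matrix.mul_nonsing_inv _ hd, Matrix.mul_one,
    Matrix.trace_conjTranspose]
  rfl

lemma aux_char_inv {G : Type} [Group G] [Fintype G] (V : FDRep ℂ G) (g : G) :
    V.character g⁻¹ = (starRingEnd ℂ) (V.character g) := by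
  classical
  let b := Module.finBasis ℂ V
  let M : G →* Matrix _ _ ℂ :=
    ((LinearMap.toMatrixAlgEquiv b).toMulEquiv.toMonoidHom).comp V.ρ
  have h : ∀ x, V.character x = (M x).trace := fun x =>
    LinearMap.trace_eq_matrix_trace ℂ b (V.ρ x)
  rw [h, h]
  exact aux_trace_inv M g

lemma aux_dual_sum {Q : Type} [CommGroup Q] [Finite Q] [Fintype (Q →* ℂˣ)] (q : Q)
    [Decidable (q = 1)] :
    ∑ χ : Q →* ℂˣ, (χ q : ℂ) = if q = 1 then (Nat.card Q : ℂ) else 0 := by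
  classical
  have : NeZero (Monoid.exponent Q) := ⟨Monoid.exponent_ne_zero_of_finite⟩
  let f : (Q →* ℂˣ) →* ℂ := (Units.coeHom ℂ).comp (MonoidHom.eval q)
  have h := sum_hom_units f
  have hf : f = 1 ↔ q = 1 := by
    constructor
    · intro h1
      by_contra hq
      obtain ⟨φ, hφ⟩ := CommGroup.exists_apply_ne_one_of_hasEnoughRootsOfUnity Q ℂ hq
      apply hφ
      ext
      exact DFunLike.congr_fun h1 φ
    · rintro rfl
      ext χ
      simp [f]
  simp only [hf] at h
  rw [← CommGroup.card_monoidHom_of_hasEnoughRootsOfUnity Q ℂ, Nat.card_eq_fintype_card]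
  refine Eq.trans h ?_
  split_ifs <;> simp

lemma aux_dual_sum' {Q : Type} [Group Q] (hQ : ∀ a b : Q, a * b = b * a) [Finite Q]
    [Fintype (Q →* ℂˣ)] (q : Q) [Decidable (q = 1)] :
    ∑ χ : Q →* ℂˣ, (χ q : ℂ) = if q = 1 then (Nat.card Q : ℂ) else 0 := by
  let _ : CommGroup Q := { (inferInstance : Group Q) with mul_comm := hQ }
  exact aux_dual_sum q

/-- twist of a representation -/
noncomputable def auxTwist {G : Type} [Group G] (V : FDRep ℂ G) (χ : G →* ℂˣ) : FDRep ℂ G :=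
  FDRep.of (V := V)
    { toFun := fun g => (χ g : ℂ) • V.ρ g
      map_one' := by simp
      map_mul' := fun a b => by
        simp [smul_smul, mul_comm] }

lemma auxTwist_char {G : Type} [Group G] (V : FDRep ℂ G) (χ : G →* ℂˣ) (g : G) :
    (auxTwist V χ).character g = χ g * V.character g := by
  change LinearMap.trace ℂ V ((χ g : ℂ) • V.ρ g) = _
  rw [map_smul]
  rfl

lemma aux_inner {G : Type} [Group G] [Fintype G] (V : FDRep ℂ G) (hV : CategoryTheory.Simple V)
    (χ : G →* ℂˣ) [Decidable ((fun g => (χ g : ℂ) * V.character g) = V.character)] :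
    ∑ g : G, (χ g : ℂ) * V.character g * V.character g⁻¹ =
      if (fun g => (χ g : ℂ) * V.character g) = V.character then (Nat.card G : ℂ) else 0 := by
  have hn := (FDRep.simple_iff_char_is_norm_one V).1 hV
  have : CategoryTheory.Simple (auxTwist V χ) := by
    rw [FDRep.simple_iff_char_is_norm_one, ← hn]
    refine Finset.sum_congr rfl fun g _ => ?_
    rw [auxTwist_char, auxTwist_char, mul_mul_mul_comm, ← Units.val_mul, ← map_mul]
    simp
  split_ifs with h
  · rw [← hn]
    exact Finset.sum_congr rfl fun g _ => by rw [congrFun h g]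
  · have := invertibleOfNonzero (NeZero.ne (Nat.card G : ℂ))
    have ho := FDRep.char_orthonormal (auxTwist V χ) V
    rw [if_neg] at ho
    · simp only [auxTwist_char] at ho
      exact (mul_eq_zero.1 ho).resolve_left (inv_ne_zero (NeZero.ne (Nat.card G : ℂ)))
    · rintro ⟨i⟩
      apply h
      ext g
      rw [← auxTwist_char, FDRep.char_iso i]

/-- `#Stab_{Q̂}(ρ) = ⟨Res_N ρ, Res_N ρ⟩`. -/
theorem stab_card_eq_res_selfInner
    (G : Type) [Group G] [Fintype G] (N : Subgroup G) [N.Normal]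
    (hQ : ∀ a b : G ⧸ N, a * b = b * a)
    (ρ : G → ℂ) (hρ : IsIrrChar G ρ) :
    (Nat.card {χ : (G ⧸ N) →* ℂˣ // charMul N χ ρ = ρ} : ℂ)
      = (Nat.card ↥N : ℂ)⁻¹ * ∑ᶠ n ∈ (N : Set G), ρ n * (starRingEnd ℂ) (ρ n) := by
  classical
  obtain ⟨V, hV, rfl⟩ := hρ
  let _ : Fintype ((G ⧸ N) →* ℂˣ) := Fintype.ofFinite _
  have key : ∑ χ : (G ⧸ N) →* ℂˣ, ∑ g : G,
      (χ (g : G ⧸ N) : ℂ) * V.character g * V.character g⁻¹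
      = Nat.card G * (Nat.card {χ : (G ⧸ N) →* ℂˣ // charMul N χ V.character = V.character} : ℂ) := by
    have : ∀ χ : (G ⧸ N) →* ℂˣ, ∑ g : G,
      (χ (g : G ⧸ N) : ℂ) * V.character g * V.character g⁻¹ =
        if charMul N χ V.character = V.character then (Nat.card G : ℂ) else 0 := fun χ =>
      aux_inner V hV (χ.comp (QuotientGroup.mk' N))
    rw [Finset.sum_congr rfl fun χ _ => this χ, ← Finset.sum_filter, Finset.sum_const,
      Nat.card_eq_fintype_card (α := {χ : (G ⧸ N) →* ℂˣ // _}), Fintype.card_subtype,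
      nsmul_eq_mul, mul_comm]
  have key2 : ∑ χ : (G ⧸ N) →* ℂˣ, ∑ g : G,
      (χ (g : G ⧸ N) : ℂ) * V.character g * V.character g⁻¹
      = Nat.card (G ⧸ N) * ∑ᶠ n ∈ (N : Set G), V.character n * (starRingEnd ℂ) (V.character n) := by
    rw [Finset.sum_comm, finsum_mem_eq_finite_toFinset_sum _ (Set.toFinite _), Finset.mul_sum]
    have : ((Set.toFinite (N : Set G)).toFinset) = Finset.univ.filter (fun g => g ∈ N) := by
      ext; simp
    rw [this, Finset.sum_filter]
    refine Finset.sum_congr rfl fun g _ => ?_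
    rw [← Finset.sum_mul, ← Finset.sum_mul, aux_dual_sum' hQ, aux_char_inv, mul_assoc, ite_mul]
    simp only [QuotientGroup.eq_one_iff, zero_mul]
  rw [key] at key2
  have hc : (Nat.card G : ℂ) = Nat.card (G ⧸ N) * Nat.card N := by
    rw [N.card_eq_card_quotient_mul_card_subgroup]; push_cast; rfl
  have h1 : (Nat.card (G ⧸ N) : ℂ) ≠ 0 := Nat.cast_ne_zero.2 Nat.card_pos.ne'
  have h2 : (Nat.card N : ℂ) ≠ 0 := Nat.cast_ne_zero.2 Nat.card_pos.ne'
  rw [hc, mul_assoc] at key2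
  rw [eq_inv_mul_iff_mul_eq₀ h2]
  exact mul_left_cancel₀ h1 key2
end

section
/- Let G be a finite group, N a normal subgroup with Q = G/N abelian, q ∈ G, and k ≥ 1 an integer. Then R_q ⊆ R_{q^k} (every Q̂-orbit of irreducible characters of G containing a character not identically zero on qN also contains one not identically zero on q^k N), and the number of conjugacy classes of G contained in qN is at most the number of conjugacy classes of G contained in q^k N. -/
open scoped BigOperators

variable {G : Type} [Group G]

theorem aux_sum_dual {Q : Type} [Group Q] [Finite Q] (hQ : ∀ a b : Q, a * b = b * a) 
    [Fintype (Q →* ℂˣ)] (x : Q) (hx : x ≠ 1) : ∑ χ : Q →* ℂˣ, ((χ x : ℂˣ) : ℂ) = 0 := by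
  let _ : CommGroup Q := { mul_comm := hQ }
  have : NeZero (Monoid.exponent Q) := ⟨Monoid.exponent_ne_zero_of_finite⟩
  obtain ⟨φ, hφ⟩ := CommGroup.exists_apply_ne_one_of_hasEnoughRootsOfUnity Q ℂ hx
  have h1 : ∑ χ : Q →* ℂˣ, ((χ x : ℂˣ) : ℂ) = (φ x : ℂ) * ∑ χ : Q →* ℂˣ, ((χ x : ℂˣ) : ℂ) := by
    rw [Finset.mul_sum, ← Equiv.sum_comp (Equiv.mulLeft φ)]
    simp
  have h2 : ((φ x : ℂˣ) : ℂ) ≠ 1 := fun h => hφ (by ext; simpa using h)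
  have h3 : (1 - (φ x : ℂ)) * ∑ χ : Q →* ℂˣ, ((χ x : ℂˣ) : ℂ) = 0 := by
    rw [sub_mul, one_mul, ← h1, sub_self]
  exact (mul_eq_zero.mp h3).resolve_left (sub_ne_zero.mpr (Ne.symm h2))

theorem aux_finite_dual {Q : Type} [Group Q] [Finite Q] (hQ : ∀ a b : Q, a * b = b * a) : 
    Finite (Q →* ℂˣ) := by
  let _ : CommGroup Q := { mul_comm := hQ }
  have : NeZero (Monoid.exponent Q) := ⟨Monoid.exponent_ne_zero_of_finite⟩
  infer_instance

theorem aux_orth {G : Type} [Group G] [Fintype G] {ρ σ : G → ℂ} (hρ : IsIrrChar G ρ)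
    (hσ : IsIrrChar G σ) [Decidable (ρ = σ)] :
    ∑ g, ρ g * σ g⁻¹ = if ρ = σ then (Nat.card G : ℂ) else 0 := by
  classical
  obtain ⟨V, hV, rfl⟩ := hρ
  obtain ⟨W, hW, rfl⟩ := hσ
  have hne : (Nat.card G : ℂ) ≠ 0 := NeZero.ne _
  let _ := invertibleOfNonzero hne
  split_ifs with h
  · rw [← h]
    exact (FDRep.simple_iff_char_is_norm_one V).mp hV
  · have := FDRep.char_orthonormal V W
    rw [if_neg (fun hh => h (FDRep.char_iso hh.some))] at this
    exact (mul_eq_zero.mp this).resolve_left (inv_ne_zero hne)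

theorem aux_charMul {G : Type} [Group G] [Fintype G] (N : Subgroup G) [N.Normal]
    (χ : (G ⧸ N) →* ℂˣ) {ρ : G → ℂ} (hρ : IsIrrChar G ρ) : IsIrrChar G (charMul N χ ρ) := by
  obtain ⟨V, hV, rfl⟩ := hρ
  let r : G →* (V →ₗ[ℂ] V) :=
    { toFun := fun g => ((χ (g : G ⧸ N) : ℂˣ) : ℂ) • V.ρ g
      map_one' := by simp
      map_mul' := fun a b => by
        ext v
        simp [smul_smul, mul_comm] }
  have hr : (FDRep.of r).character = charMul N χ V.character := by
    ext g
    change LinearMap.trace ℂ V (((χ (g : G ⧸ N) : ℂˣ) : ℂ) • V.ρ g) = _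
    simp [charMul, FDRep.character]
  refine ⟨FDRep.of r, ?_, hr.symm⟩
  rw [FDRep.simple_iff_char_is_norm_one] at hV ⊢
  rw [hr, ← hV]
  refine Finset.sum_congr rfl fun g _ => ?_
  simp only [charMul]
  have : ((χ (g : G ⧸ N) : ℂˣ) : ℂ) * ((χ ((g⁻¹ : G) : G ⧸ N) : ℂˣ) : ℂ) = 1 := by
    simp
  linear_combination (V.character g * V.character g⁻¹) * this

theorem aux_schur {G V : Type} [Group G] [Fintype G] [AddCommGroup V] [Module ℂ V]
    [FiniteDimensional ℂ V] (ρ : Representation ℂ G V) [ρ.IsIrreducible] (f : G → ℂ)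
    (hf : ∀ g h : G, f (h * g * h⁻¹) = f g) (h0 : ∑ g, f g * ρ.character g = 0) :
    ∑ g, f g • ρ g = 0 := by
  let T : Representation.IntertwiningMap ρ ρ :=
    { toLinearMap := ∑ g, f g • ρ g
      isIntertwining' := fun h => by
        rw [← Module.End.mul_eq_comp, ← Module.End.mul_eq_comp, Finset.sum_mul, Finset.mul_sum,
          ← Equiv.sum_comp (MulAut.conj h).toEquiv]
        refine Finset.sum_congr rfl fun g _ => ?_
        simp [hf, ← map_mul] }
  obtain ⟨c, hc⟩ :=
    (Representation.IsIrreducible.algebraMap_intertwiningMap_bijective_of_isAlgClosed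
      (ρ := ρ)).2 T
  have hc' : ∑ g, f g • ρ g = c • (LinearMap.id : V →ₗ[ℂ] V) := by
    have := congrArg Representation.IntertwiningMap.toLinearMap hc
    rw [show ∑ g, f g • ρ g = T.toLinearMap from rfl, ← this]
    rfl
  have ht : LinearMap.trace ℂ V (∑ g, f g • ρ g) = 0 := by
    rw [← h0, map_sum]
    simp [Representation.character]
  rw [hc'] at ht ⊢
  rw [map_smul, LinearMap.trace_id, smul_eq_mul, mul_eq_zero] at ht
  rcases ht with h | h
  · rw [h, zero_smul]
  · have : Module.finrank ℂ V = 0 := by exact_mod_cast h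
    have := Module.finrank_zero_iff.mp this
    ext v
    exact Subsingleton.elim _ _

theorem aux_simple_zero {G M : Type} [Group G] [Fintype G] [AddCommGroup M]
    [Module (MonoidAlgebra ℂ G) M] [Module ℂ M] [IsScalarTower ℂ (MonoidAlgebra ℂ G) M]
    [hm' : IsSimpleModule (MonoidAlgebra ℂ G) M]
    (f : G → ℂ) (hf : ∀ g h : G, f (h * g * h⁻¹) = f g)
    (h0 : ∀ ρ, IsIrrChar G ρ → ∑ g, f g * ρ g = 0) (x : M) :
    (∑ g, MonoidAlgebra.single g (f g) : MonoidAlgebra ℂ G) • x = 0 := by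
  classical
  let r : Representation ℂ G M := Representation.ofModule' (k := ℂ) (G := G) M
  have ha : r.asAlgebraHom = Algebra.lsmul ℂ ℂ M :=
    (MonoidAlgebra.lift ℂ (M →ₗ[ℂ] M) G).apply_symm_apply _
  let e : r.asModule ≃ₗ[MonoidAlgebra ℂ G] M :=
    { r.asModuleEquiv.toAddEquiv with
      map_smul' := fun a y => by
        change r.asModuleEquiv (a • y) = a • r.asModuleEquiv y
        rw [Representation.asModuleEquiv_map_smul, ha]
        rfl }
  have hr : r.IsIrreducible :=
    (Representation.irreducible_iff_isSimpleModule_asModule r).mpr (IsSimpleModule.congr e)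
  have hfin : FiniteDimensional ℂ M := by
    have : Module.Finite (MonoidAlgebra ℂ G) M := inferInstance
    exact Module.Finite.trans (MonoidAlgebra ℂ G) _
  have hirr : IsIrrChar G r.character := by
    refine ⟨FDRep.of r, ?_, rfl⟩
    have hne : (Nat.card G : ℂ) ≠ 0 := NeZero.ne _
    let _ := invertibleOfNonzero hne
    rw [FDRep.simple_iff_char_is_norm_one]
    have := Representation.char_orthonormal r r
    rw [if_pos ⟨Representation.Equiv.refl r⟩, inv_mul_eq_one₀ hne] at this
    exact this.symm
  have h1 := aux_schur r f hf (h0 _ hirr)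
  have h2 : r.asAlgebraHom (∑ g, MonoidAlgebra.single g (f g)) = 0 := by
    rw [← h1]; simp
  rw [ha] at h2
  exact congrArg (fun T : M →ₗ[ℂ] M => T x) h2

theorem aux_complete {G : Type} [Group G] [Fintype G] (f : G → ℂ)
    (hf : ∀ g h : G, f (h * g * h⁻¹) = f g)
    (h0 : ∀ ρ, IsIrrChar G ρ → ∑ g, f g * ρ g = 0) : f = 0 := by
  classical
  let z : MonoidAlgebra ℂ G := ∑ g, MonoidAlgebra.single g (f g)
  have hz : z ∈ Ring.jacobson (MonoidAlgebra ℂ G) := by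
    refine Submodule.mem_sInf.mpr fun m hm => ?_
    have hm' : IsSimpleModule (MonoidAlgebra ℂ G) (MonoidAlgebra ℂ G ⧸ m) :=
      isSimpleModule_iff_isCoatom.mpr hm
    have := aux_simple_zero f hf h0 (Submodule.Quotient.mk 1 : MonoidAlgebra ℂ G ⧸ m)
    rw [← Submodule.Quotient.mk_smul, smul_eq_mul, mul_one, Submodule.Quotient.mk_eq_zero] at this
    exact this
  rw [IsSemisimpleRing.jacobson_eq_bot, Submodule.mem_bot] at hz
  ext g
  have := congrArg (fun w : MonoidAlgebra ℂ G => w.coeff g) hz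
  simpa [z, Finsupp.single_apply] using this

theorem aux_B {G : Type} [Group G] [Fintype G] (N : Subgroup G) [N.Normal]
    (hQ : ∀ a b : G ⧸ N, a * b = b * a) (q : G) [Fintype ((G ⧸ N) →* ℂˣ)]
    {ρ σ : G → ℂ} (hρ : IsIrrChar G ρ) (hσ : IsIrrChar G σ)
    [DecidablePred (· ∈ coset N q)] [∀ χ, Decidable (charMul N χ ρ = σ)] :
    (Fintype.card ((G ⧸ N) →* ℂˣ) : ℂ) * ∑ g, (if g ∈ coset N q then ρ g * σ g⁻¹ else 0) =
    ∑ χ : (G ⧸ N) →* ℂˣ, ((χ (q : G ⧸ N) : ℂˣ) : ℂ)⁻¹ *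
      (if charMul N χ ρ = σ then (Nat.card G : ℂ) else 0) := by
  have h1 : ∀ χ : (G ⧸ N) →* ℂˣ, ((χ (q : G ⧸ N) : ℂˣ) : ℂ)⁻¹ *
      (if charMul N χ ρ = σ then (Nat.card G : ℂ) else 0) =
      ∑ g : G, ((χ ((q : G ⧸ N)⁻¹ * (g : G ⧸ N)) : ℂˣ) : ℂ) * (ρ g * σ g⁻¹) := by
    intro χ
    rw [← aux_orth (aux_charMul N χ hρ) hσ, Finset.mul_sum]
    refine Finset.sum_congr rfl fun g _ => ?_
    simp [charMul, mul_assoc]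
  rw [Finset.sum_congr rfl fun χ _ => h1 χ, Finset.sum_comm, Finset.mul_sum]
  refine Finset.sum_congr rfl fun g _ => ?_
  rw [← Finset.sum_mul]
  split_ifs with hg
  · have : ((q : G ⧸ N)⁻¹ * (g : G ⧸ N)) = 1 := by
      rw [show (g : G ⧸ N) = q from hg, inv_mul_cancel]
    rw [this]
    simp
  · rw [aux_sum_dual hQ _ (fun h => hg (inv_mul_eq_one.mp h).symm)]
    simp

theorem aux_stab {G : Type} [Group G] (N : Subgroup G) [N.Normal]
    (q : G) (χ : (G ⧸ N) →* ℂˣ) {ρ : G → ℂ} (h : charMul N χ ρ = ρ)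
    (hn : ∃ g ∈ coset N q, ρ g ≠ 0) : χ (q : G ⧸ N) = 1 := by
  obtain ⟨g, hg, h0⟩ := hn
  have := congrFun h g
  simp only [charMul] at this
  rw [show (g : G ⧸ N) = q from hg] at this
  ext
  simpa using mul_right_cancel₀ h0 (this.trans (one_mul _).symm)

theorem aux_nonzero {G : Type} [Group G] [Fintype G] (N : Subgroup G) [N.Normal]
    (hQ : ∀ a b : G ⧸ N, a * b = b * a) (q : G)
    {ρ : G → ℂ} (hρ : IsIrrChar G ρ) [DecidablePred (· ∈ coset N q)]
    (hs : ∀ χ : (G ⧸ N) →* ℂˣ, charMul N χ ρ = ρ → χ (q : G ⧸ N) = 1) :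
    ∑ g, (if g ∈ coset N q then ρ g * ρ g⁻¹ else 0) ≠ 0 := by
  classical
  have := aux_finite_dual hQ
  have := Fintype.ofFinite ((G ⧸ N) →* ℂˣ)
  intro h0
  have hB := aux_B N hQ q hρ hρ
  have h1 : ∀ χ : (G ⧸ N) →* ℂˣ, ((χ (q : G ⧸ N) : ℂˣ) : ℂ)⁻¹ *
      (if charMul N χ ρ = ρ then (Nat.card G : ℂ) else 0) =
      ((if charMul N χ ρ = ρ then Nat.card G else 0 : ℕ) : ℂ) := by
    intro χ
    split_ifs with h
    · simp [hs χ h]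
    · simp
  rw [h0, mul_zero, Finset.sum_congr rfl fun χ _ => h1 χ, ← Nat.cast_sum] at hB
  have h2 := (Finset.sum_eq_zero_iff.mp (Nat.cast_eq_zero.mp hB.symm)) 1 (Finset.mem_univ _)
  rw [if_pos (by ext g; simp [charMul])] at h2
  exact Nat.card_pos.ne' h2

theorem aux_mem_R {G : Type} [Group G] (N : Subgroup G) [N.Normal]
    (q : G) (S : Set (G → ℂ)) : S ∈ Rset N q ↔
    ∃ ρ, IsIrrChar G ρ ∧ S = qhatOrbit N ρ ∧ ∃ g ∈ coset N q, ρ g ≠ 0 := by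
  constructor
  · rintro ⟨⟨ρ, hρ, rfl⟩, ρ', ⟨χ, rfl⟩, g, hg, h⟩
    exact ⟨ρ, hρ, rfl, g, hg, right_ne_zero_of_mul h⟩
  · rintro ⟨ρ, hρ, rfl, g, hg, h⟩
    exact ⟨⟨ρ, hρ, rfl⟩, ρ, ⟨1, by ext g; simp [charMul]⟩, g, hg, h⟩

theorem aux_sub {G : Type} [Group G] [Fintype G] (N : Subgroup G) [N.Normal]
    (hQ : ∀ a b : G ⧸ N, a * b = b * a) (q : G) (k : ℕ) : Rset N q ⊆ Rset N (q ^ k) := by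
  classical
  intro S hS
  rw [aux_mem_R] at hS ⊢
  obtain ⟨ρ, hρ, rfl, hn⟩ := hS
  refine ⟨ρ, hρ, rfl, ?_⟩
  by_contra! hc
  refine aux_nonzero N hQ (q ^ k) hρ (fun χ h => ?_) ?_
  · have := aux_stab N q χ h hn
    rw [QuotientGroup.mk_pow, map_pow, this, one_pow]
  · refine Finset.sum_eq_zero fun g _ => ?_
    split_ifs with hg
    · rw [hc g hg, zero_mul]
    · rfl

theorem aux_mem_C {G : Type} [Group G] (N : Subgroup G) [N.Normal]
    (hQ : ∀ a b : G ⧸ N, a * b = b * a) (q : G) (g : G) :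
    ConjClasses.mk g ∈ Cset N q ↔ g ∈ coset N q := by
  constructor
  · intro h
    exact h ConjClasses.mem_carrier_mk
  · intro h x hx
    rw [ConjClasses.mem_carrier_iff_mk_eq, ConjClasses.mk_eq_mk_iff_isConj, isConj_iff] at hx
    obtain ⟨c, hc⟩ := hx
    change (x : G ⧸ N) = q
    rw [← show (g : G ⧸ N) = q from h, ← hc, QuotientGroup.mk_mul, QuotientGroup.mk_mul,
      QuotientGroup.mk_inv, hQ (c : G ⧸ N), mul_inv_cancel_right]

/-- chosen representative -/
noncomputable def auxRep {G : Type} [Group G] (N : Subgroup G) [N.Normal] (q : G)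
    (S : Rset N q) : G → ℂ := ((aux_mem_R N q S.1).mp S.2).choose

theorem auxRep_spec {G : Type} [Group G] (N : Subgroup G) [N.Normal] (q : G)
    (S : Rset N q) : IsIrrChar G (auxRep N q S) ∧ S.1 = qhatOrbit N (auxRep N q S) ∧
      ∃ g ∈ coset N q, auxRep N q S g ≠ 0 :=
  ((aux_mem_R N q S.1).mp S.2).choose_spec

theorem aux_irr_conj {G : Type} [Group G] {ρ : G → ℂ} (hρ : IsIrrChar G ρ) {a b : G}
    (h : ConjClasses.mk a = ConjClasses.mk b) : ρ a = ρ b := by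
  obtain ⟨V, -, rfl⟩ := hρ
  rw [ConjClasses.mk_eq_mk_iff_isConj, isConj_iff] at h
  obtain ⟨c, rfl⟩ := h
  rw [FDRep.char_conj]

theorem aux_orbit_eq {G : Type} [Group G] (N : Subgroup G) [N.Normal] (χ : (G ⧸ N) →* ℂˣ)
    (hQ : ∀ a b : G ⧸ N, a * b = b * a)
    (ρ : G → ℂ) : qhatOrbit N (charMul N χ ρ) = qhatOrbit N ρ := by
  ext τ
  constructor
  · rintro ⟨ψ, rfl⟩
    exact ⟨ψ * χ, by ext g; simp [charMul, mul_assoc]⟩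
  · rintro ⟨ψ, rfl⟩
    exact ⟨ψ * χ⁻¹, by ext g; simp [charMul, mul_assoc]⟩

theorem aux_pair {G : Type} [Group G] [Fintype G] (N : Subgroup G) [N.Normal]
    (hQ : ∀ a b : G ⧸ N, a * b = b * a) (q : G) [DecidablePred (· ∈ coset N q)]
    (S T : Rset N q) (hST : S ≠ T) :
    ∑ g, (if g ∈ coset N q then auxRep N q S g * auxRep N q T g⁻¹ else 0) = 0 := by
  classical
  have := aux_finite_dual hQ
  have := Fintype.ofFinite ((G ⧸ N) →* ℂˣ)
  have hB := aux_B N hQ q (auxRep_spec N q S).1 (auxRep_spec N q T).1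
  rw [Finset.sum_eq_zero (s := Finset.univ (α := (G ⧸ N) →* ℂˣ))] at hB
  · exact (mul_eq_zero.mp hB).resolve_left (by exact_mod_cast Fintype.card_ne_zero)
  · intro χ _
    rw [if_neg, mul_zero]
    intro h
    apply hST
    apply Subtype.ext
    rw [(auxRep_spec N q S).2.1, (auxRep_spec N q T).2.1, ← h, aux_orbit_eq N χ hQ]

/-- restriction of the representatives to the classes in the coset -/
noncomputable def auxVec {G : Type} [Group G] (N : Subgroup G) [N.Normal] (q : G)
    (S : Rset N q) : Cset N q → ℂ := fun c => auxRep N q S c.1.out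

theorem aux_indep {G : Type} [Group G] [Fintype G] (N : Subgroup G) [N.Normal]
    (hQ : ∀ a b : G ⧸ N, a * b = b * a) (q : G) : LinearIndependent ℂ (auxVec N q) := by
  classical
  rw [linearIndependent_iff']
  intro s c hc T hT
  have hg : ∀ g ∈ coset N q, ∑ S ∈ s, c S * auxRep N q S g = 0 := by
    intro g hg
    have := congrFun hc ⟨ConjClasses.mk g, (aux_mem_C N hQ q g).mpr hg⟩
    simp only [Finset.sum_apply, Pi.smul_apply, smul_eq_mul, Pi.zero_apply, auxVec] at this
    rw [← this]
    refine Finset.sum_congr rfl fun S _ => ?_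
    congr 1
    exact aux_irr_conj (auxRep_spec N q S).1 (Quotient.out_eq _).symm
  have h1 : ∑ S ∈ s, c S *
      ∑ g, (if g ∈ coset N q then auxRep N q S g * auxRep N q T g⁻¹ else 0) = 0 := by
    simp_rw [Finset.mul_sum]
    rw [Finset.sum_comm]
    refine Finset.sum_eq_zero fun g _ => ?_
    split_ifs with h
    · simp_rw [← mul_assoc]
      rw [← Finset.sum_mul, hg g h, zero_mul]
    · simp
  rw [Finset.sum_eq_single T (fun S _ hST => by rw [aux_pair N hQ q S T hST, mul_zero])
    (fun h => absurd hT h)] at h1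
  refine (mul_eq_zero.mp h1).resolve_right ?_
  exact aux_nonzero N hQ q (auxRep_spec N q T).1
    fun χ h => aux_stab N q χ h (auxRep_spec N q T).2.2

/-- extension by zero -/
noncomputable def auxExt {G : Type} [Group G] (N : Subgroup G) [N.Normal] (q : G)
    (φ : Cset N q → ℂ) (g : G) : ℂ :=
  open Classical in if h : ConjClasses.mk g ∈ Cset N q then φ ⟨_, h⟩ else 0

/-- pairing with representatives -/
noncomputable def auxMap {G : Type} [Group G] [Fintype G] (N : Subgroup G) [N.Normal] (q : G) :
    (Cset N q → ℂ) →ₗ[ℂ] (Rset N q → ℂ) where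
  toFun φ S := ∑ g, auxExt N q φ g * auxRep N q S g
  map_add' a b := by
    ext S
    rw [Pi.add_apply, ← Finset.sum_add_distrib]
    refine Finset.sum_congr rfl fun g _ => ?_
    unfold auxExt
    split_ifs <;> simp [add_mul]
  map_smul' c a := by
    ext S
    simp only [Pi.smul_apply, RingHom.id_apply, smul_eq_mul]
    rw [Finset.mul_sum]
    refine Finset.sum_congr rfl fun g _ => ?_
    unfold auxExt
    split_ifs <;> simp [mul_assoc]

theorem auxMap_inj {G : Type} [Group G] [Fintype G] (N : Subgroup G) [N.Normal]
    (hQ : ∀ a b : G ⧸ N, a * b = b * a) (q : G) : Function.Injective (auxMap N q) := by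
  rw [← LinearMap.ker_eq_bot, LinearMap.ker_eq_bot']
  intro φ hφ
  have h0 : ∀ S, ∑ g, auxExt N q φ g * auxRep N q S g = 0 := fun S => congrFun hφ S
  have hz : ∀ g, g ∉ coset N q → auxExt N q φ g = 0 := fun g hg => by
    unfold auxExt
    rw [dif_neg (fun h => hg ((aux_mem_C N hQ q g).mp h))]
  have key : auxExt N q φ = 0 := by
    apply aux_complete
    · intro g h
      have : ConjClasses.mk (h * g * h⁻¹) = ConjClasses.mk g :=
        (ConjClasses.mk_eq_mk_iff_isConj.mpr (isConj_iff.mpr ⟨h, rfl⟩)).symm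
      have aux : ∀ c d : ConjClasses G, c = d →
          (open Classical in if h : c ∈ Cset N q then φ ⟨_, h⟩ else 0) =
          (open Classical in if h : d ∈ Cset N q then φ ⟨_, h⟩ else 0) := by
        rintro c _ rfl
        rfl
      exact aux _ _ this
    · intro ρ hρ
      by_cases hn : ∃ g ∈ coset N q, ρ g ≠ 0
      · let S : Rset N q := ⟨qhatOrbit N ρ, (aux_mem_R N q _).mpr ⟨ρ, hρ, rfl, hn⟩⟩
        have hm : ρ ∈ qhatOrbit N (auxRep N q S) := by
          rw [← (auxRep_spec N q S).2.1]
          exact ⟨1, by ext g; simp [charMul]⟩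
        obtain ⟨χ, hχ⟩ := hm
        have : ∑ g, auxExt N q φ g * ρ g =
            ((χ (q : G ⧸ N) : ℂˣ) : ℂ) * ∑ g, auxExt N q φ g * auxRep N q S g := by
          rw [Finset.mul_sum]
          refine Finset.sum_congr rfl fun g _ => ?_
          by_cases hg : g ∈ coset N q
          · rw [hχ, ← show (g : G ⧸ N) = q from hg]
            simp only [charMul]
            ring
          · simp [hz g hg]
        rw [this, h0, mul_zero]
      · push Not at hn
        refine Finset.sum_eq_zero fun g _ => ?_
        by_cases hg : g ∈ coset N q
        · rw [hn g hg, mul_zero]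
        · rw [hz g hg, zero_mul]
  ext ⟨c, hc⟩
  induction c using Quotient.inductionOn with
  | h g =>
    have := congrFun key g
    unfold auxExt at this
    rw [dif_pos (show ConjClasses.mk g ∈ Cset N q from hc)] at this
    exact this

theorem aux_card {G : Type} [Group G] [Fintype G] (N : Subgroup G) [N.Normal]
    (hQ : ∀ a b : G ⧸ N, a * b = b * a) (q : G) :
    (Rset N q).Finite ∧ (Cset N q).ncard = (Rset N q).ncard := by
  classical
  have : Fintype (Cset N q) := Fintype.ofFinite _
  have hli := aux_indep N hQ q
  have hfin : Finite (Rset N q) := hli.finite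
  have : Fintype (Rset N q) := Fintype.ofFinite _
  refine ⟨hfin, ?_⟩
  rw [← Nat.card_coe_set_eq, ← Nat.card_coe_set_eq, Nat.card_eq_fintype_card,
    Nat.card_eq_fintype_card]
  apply le_antisymm
  · simpa using LinearMap.finrank_le_finrank_of_injective (auxMap_inj N hQ q)
  · simpa using hli.fintype_card_le_finrank

/-- `R_q ⊆ R_{q^k}` and `#C_q ≤ #C_{q^k}` for all `k ≥ 1`. -/
theorem Rset_subset_pow_and_Cset_card_le
    (G : Type) [Group G] [Fintype G] (N : Subgroup G) [N.Normal]
    (hQ : ∀ a b : G ⧸ N, a * b = b * a) (q : G) (k : ℕ) (hk : 1 ≤ k) :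
    Rset N q ⊆ Rset N (q ^ k) ∧ (Cset N q).ncard ≤ (Cset N (q ^ k)).ncard := by
  refine ⟨aux_sub N hQ q k, ?_⟩
  rw [(aux_card N hQ q).2, (aux_card N hQ (q ^ k)).2]
  exact Set.ncard_le_ncard (aux_sub N hQ q k) (aux_card N hQ (q ^ k)).1
end
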